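/- Let a, b ∈ ℝⁿ be vectors with nonempty supports A = supp(a) and B = supp(b), and let (h(j))_{j=1}^{n} be independent random variables, each uniformly distributed on [0,1]. Let j_A be the (almost surely unique) minimizer of h over A and j_B the minimizer of h over B, and define the random variable Z = 1[h(j_A) = h(j_B)] · a[j_A] · b[j_B]. Then E[Z] = ⟨a,b⟩ / |A∪B|, where ⟨a,b⟩ = ∑_{k=1}^{n} a[k]·b[k]. -/

import Mathlib

/-!
Ties in the hash have probability zero, and off ties the two minimizers collide exactly when the
minimizer `j` of `h` over `A ∪ B` lies in `A ∩ B`, in which case both equal `j`. Hence `Z` is almost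
surely the function `k ↦ 1[k ∈ A ∩ B] a[k] b[k]` evaluated at `j`. Permuting the coordinates of `h`
preserves its law, so `j` is uniformly distributed on `A ∪ B`.
-/

open MeasureTheory Finset
open scoped ENNReal

/-- The product measure on `J → ℝ` in which each coordinate is an independent
uniform random variable on `[0,1]`: a uniform hash family on `J`. -/
noncomputable def uniformHash (J : Type*) [Fintype J] : Measure (J → ℝ) :=
  Measure.pi fun _ : J => (volume : Measure ℝ).restrict (Set.Icc 0 1)

/-- The support `{i : x i ≠ 0}` of a vector, as a `Finset`. -/
noncomputable def supp {n : ℕ} (x : Fin n → ℝ) : Finset (Fin n) :=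
  Finset.univ.filter fun i => x i ≠ 0

/-- A minimizer of `f` over the nonempty finite set `s` (the minimizer of a uniform
hash family over a nonempty set is almost surely unique). -/
noncomputable def argminOn {α : Type*} (s : Finset α) (hs : s.Nonempty) (f : α → ℝ) : α :=
  (s.exists_min_image f hs).choose

/-- The MinHash random variable `Z = 1[h(j_A) = h(j_B)] ⬝ a[j_A] ⬝ b[j_B]`, where
`j_A` and `j_B` are the minimizers of the hash `h` over `A` and `B` respectively. -/
noncomputable def Zuw {n : ℕ} (a b : Fin n → ℝ) (A B : Finset (Fin n))
    (hA : A.Nonempty) (hB : B.Nonempty) (h : Fin n → ℝ) : ℝ :=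
  (if h (argminOn A hA h) = h (argminOn B hB h) then (1 : ℝ) else 0) *
    a (argminOn A hA h) * b (argminOn B hB h)

section Argmin

variable {ι : Type*}

theorem argminOn_mem (s : Finset ι) (hs : s.Nonempty) (h : ι → ℝ) : argminOn s hs h ∈ s :=
  (s.exists_min_image h hs).choose_spec.1

theorem isMinOn_argminOn (s : Finset ι) (hs : s.Nonempty) (h : ι → ℝ) :
    IsMinOn h s (argminOn s hs h) :=
  (s.exists_min_image h hs).choose_spec.2

theorem eq_of_isMinOn_of_injOn {R : Type*} [PartialOrder R] {s : Set ι} {h : ι → R} {k l : ι}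
    (hinj : Set.InjOn h s) (hk : k ∈ s) (hl : l ∈ s) (hkmin : IsMinOn h s k)
    (hlmin : IsMinOn h s l) : k = l :=
  hinj hk hl (le_antisymm (hkmin hl) (hlmin hk))

theorem isMinOn_comp_swap_iff [DecidableEq ι] {R : Type*} [Preorder R] {s : Set ι} {h : ι → R}
    {k l : ι} (hk : k ∈ s) (hl : l ∈ s) :
    IsMinOn (fun i => h (Equiv.swap k l i)) s k ↔ IsMinOn h s l := by
  have hmaps : Set.MapsTo (Equiv.swap k l) s s :=
    (Equiv.swap_bijOn_self (iff_of_true hk hl)).mapsTo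
  constructor
  · intro hmin
    simpa [Function.comp_def] using hmin.comp_mapsTo hmaps (Equiv.swap_apply_right k l)
  · intro hmin
    exact hmin.comp_mapsTo hmaps (Equiv.swap_apply_left k l)

theorem isMinOn_iff_eq_argminOn {s : Finset ι} (hs : s.Nonempty) {h : ι → ℝ} {k : ι}
    (hinj : Set.InjOn h s) (hk : k ∈ s) : IsMinOn h s k ↔ k = argminOn s hs h := by
  constructor
  · intro hkmin
    exact eq_of_isMinOn_of_injOn hinj hk (argminOn_mem s hs h) hkmin (isMinOn_argminOn s hs h)
  · rintro rfl
    exact isMinOn_argminOn s hs h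

theorem argminOn_eq_of_subset {s t : Finset ι} (hs : s.Nonempty) (ht : t.Nonempty) {h : ι → ℝ}
    (hst : s ⊆ t) (hinj : Set.InjOn h t) (hmem : argminOn t ht h ∈ s) :
    argminOn s hs h = argminOn t ht h :=
  have hmin : IsMinOn h s (argminOn t ht h) := (isMinOn_argminOn t ht h).on_subset hst
  ((isMinOn_iff_eq_argminOn hs (hinj.mono hst) hmem).1 hmin).symm

variable [DecidableEq ι] {A B : Finset ι} (hA : A.Nonempty) (hB : B.Nonempty)
  (hAB : (A ∪ B).Nonempty) {h : ι → ℝ}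

theorem apply_argminOn_eq_iff_argminOn_union_mem_inter (hinj : Set.InjOn h ↑(A ∪ B)) :
    h (argminOn A hA h) = h (argminOn B hB h) ↔ argminOn (A ∪ B) hAB h ∈ A ∩ B := by
  have eqA := argminOn_eq_of_subset hA hAB subset_union_left hinj
  have eqB := argminOn_eq_of_subset hB hAB subset_union_right hinj
  constructor
  · intro hval
    have hmemA := argminOn_mem A hA h
    have hmemB := argminOn_mem B hB h
    have heq : argminOn A hA h = argminOn B hB h :=
      hinj (mem_union_left B hmemA) (mem_union_right A hmemB) hval
    rcases mem_union.1 (argminOn_mem (A ∪ B) hAB h) with hjA | hjB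
    · exact mem_inter.2 ⟨hjA, by rwa [← eqA hjA, heq]⟩
    · exact mem_inter.2 ⟨by rwa [← eqB hjB, ← heq], hjB⟩
  · intro hmem
    rw [eqA (mem_inter.1 hmem).1, eqB (mem_inter.1 hmem).2]

theorem ite_apply_argminOn_mul_eq_ite_argminOn_union (a b : ι → ℝ)
    (hinj : Set.InjOn h ↑(A ∪ B)) :
    (if h (argminOn A hA h) = h (argminOn B hB h) then (1 : ℝ) else 0) *
        a (argminOn A hA h) * b (argminOn B hB h) =
      if argminOn (A ∪ B) hAB h ∈ A ∩ B then
        a (argminOn (A ∪ B) hAB h) * b (argminOn (A ∪ B) hAB h) else 0 := by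
  simp only [apply_argminOn_eq_iff_argminOn_union_mem_inter hA hB hAB hinj]
  split_ifs with hmem
  · rw [argminOn_eq_of_subset hA hAB subset_union_left hinj (mem_inter.1 hmem).1,
      argminOn_eq_of_subset hB hAB subset_union_right hinj (mem_inter.1 hmem).2, one_mul]
  · simp

end Argmin

section Exchangeable

/-- Exchangeability of the law `μ` of a random family `h : ι → R`: permuting the indices of the
family does not change its law. For an infinite `ι` all permutations are allowed, not only the
finitely supported ones. -/
def IsExchangeable {ι R : Type*} [MeasurableSpace R] (μ : Measure (ι → R)) : Prop :=
  ∀ σ : Equiv.Perm ι, MeasurePreserving (fun h i => h (σ i)) μ μ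

theorem isExchangeable_pi {ι R : Type*} [Fintype ι] [MeasurableSpace R] (ν : Measure R)
    [SigmaFinite ν] : IsExchangeable (Measure.pi fun _ : ι => ν) := fun σ =>
  measurePreserving_arrowCongr' (fun _ => ν) (fun _ => ν) σ.symm (MeasurableEquiv.refl R)
    fun _ => MeasurePreserving.id ν

variable {ι R : Type*} [LinearOrder R] [TopologicalSpace R] [OrderClosedTopology R]
  [SecondCountableTopology R] [MeasurableSpace R] [OpensMeasurableSpace R]

theorem measurableSet_setOf_isMinOn {s : Set ι} (hs : s.Countable) (k : ι) :
    MeasurableSet {h : ι → R | IsMinOn h s k} := by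
  simp only [isMinOn_iff, Set.ofPred_forall]
  exact .biInter hs fun j _ => measurableSet_le (measurable_pi_apply k) (measurable_pi_apply j)

variable {μ : Measure (ι → R)}

theorem measure_setOf_isMinOn_eq (hμ : IsExchangeable μ) {s : Set ι} (hs : s.Countable) {k l : ι}
    (hk : k ∈ s) (hl : l ∈ s) : μ {h | IsMinOn h s k} = μ {h | IsMinOn h s l} := by
  classical
  rw [← (hμ (Equiv.swap k l)).measure_preimage
    (measurableSet_setOf_isMinOn hs k).nullMeasurableSet]
  simp only [Set.preimage_ofPred_eq, isMinOn_comp_swap_iff hk hl]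

theorem sum_measureReal_setOf_isMinOn [IsProbabilityMeasure μ] {s : Finset ι} (hs : s.Nonempty)
    (hinj : ∀ᵐ h ∂μ, Set.InjOn h s) : ∑ k ∈ s, μ.real {h | IsMinOn h s k} = 1 := by
  have hdisj : (s : Set ι).Pairwise
      (Function.onFun (AEDisjoint μ) fun k => {h | IsMinOn h s k}) := by
    intro k hk l hl hkl
    rw [Function.onFun, AEDisjoint, measure_eq_zero_iff_ae_notMem]
    filter_upwards [hinj] with h hinj ⟨hkmin, hlmin⟩
    exact hkl (eq_of_isMinOn_of_injOn hinj hk hl hkmin hlmin)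
  have hcover : ⋃ k ∈ s, {h : ι → R | IsMinOn h s k} = Set.univ := by
    refine Set.eq_univ_of_forall fun h => ?_
    simpa [isMinOn_iff] using s.exists_min_image h hs
  rw [← measureReal_biUnion_finset₀ hdisj fun k _ =>
    (measurableSet_setOf_isMinOn s.countable_toSet k).nullMeasurableSet, hcover, probReal_univ]

theorem measureReal_setOf_isMinOn [IsProbabilityMeasure μ] (hμ : IsExchangeable μ) {s : Finset ι}
    (hinj : ∀ᵐ h ∂μ, Set.InjOn h s) {k : ι} (hk : k ∈ s) :
    μ.real {h | IsMinOn h s k} = (#s : ℝ)⁻¹ := by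
  have hconst : ∀ l ∈ s, μ.real {h | IsMinOn h s l} = μ.real {h | IsMinOn h s k} := fun l hl =>
    congrArg ENNReal.toReal (measure_setOf_isMinOn_eq hμ s.countable_toSet hl hk)
  have htotal := sum_measureReal_setOf_isMinOn ⟨k, hk⟩ hinj
  rw [sum_congr rfl hconst, sum_const, nsmul_eq_mul] at htotal
  exact eq_inv_of_mul_eq_one_right htotal

theorem integral_argminOn {E : Type*} [NormedAddCommGroup E] [NormedSpace ℝ E] [CompleteSpace E]
    {μ : Measure (ι → ℝ)} [IsProbabilityMeasure μ] (hμ : IsExchangeable μ) {s : Finset ι}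
    (hs : s.Nonempty) (hinj : ∀ᵐ h ∂μ, Set.InjOn h s) (f : ι → E) :
    ∫ h, f (argminOn s hs h) ∂μ = (#s : ℝ)⁻¹ • ∑ k ∈ s, f k := by
  have hmeas (k : ι) : MeasurableSet {h : ι → ℝ | IsMinOn h s k} :=
    measurableSet_setOf_isMinOn s.countable_toSet k
  have hdecomp : ∀ᵐ h ∂μ, f (argminOn s hs h) =
      ∑ k ∈ s, {h | IsMinOn h s k}.indicator (fun _ => f k) h := by
    filter_upwards [hinj] with h hinj
    classical
    calc f (argminOn s hs h) = ∑ k ∈ s, if k = argminOn s hs h then f k else 0 := by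
          rw [sum_ite_eq', if_pos (argminOn_mem s hs h)]
      _ = ∑ k ∈ s, {h | IsMinOn h s k}.indicator (fun _ => f k) h := by
          refine sum_congr rfl fun k hk => ?_
          simp only [Set.indicator_apply, Set.mem_ofPred_eq, isMinOn_iff_eq_argminOn hs hinj hk]
  calc ∫ h, f (argminOn s hs h) ∂μ
      = ∑ k ∈ s, ∫ h, {h | IsMinOn h s k}.indicator (fun _ => f k) h ∂μ := by
        rw [integral_congr_ae hdecomp]
        exact integral_finsetSum s fun k _ => (integrable_const (f k)).indicator (hmeas k)
    _ = ∑ k ∈ s, (#s : ℝ)⁻¹ • f k := by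
        refine sum_congr rfl fun k hk => ?_
        rw [integral_indicator_const _ (hmeas k), measureReal_setOf_isMinOn hμ hinj hk]
    _ = (#s : ℝ)⁻¹ • ∑ k ∈ s, f k := smul_sum.symm

end Exchangeable

section Independent

open ProbabilityTheory

variable {R : Type*} [MeasurableSpace R] [MeasurableEq R]

theorem ae_ne_of_indepFun {Ω : Type*} [MeasurableSpace Ω] {P : Measure Ω} [IsFiniteMeasure P]
    {X Y : Ω → R} (hX : AEMeasurable X P) (hY : AEMeasurable Y P) (hXY : X ⟂ᵢ[P] Y)
    [NullSingletonClass (P.map Y)] : ∀ᵐ ω ∂P, X ω ≠ Y ω := by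
  have hdiag : (P.map X).prod (P.map Y) (Set.diagonal R) = 0 := by
    rw [Measure.measure_prod_null measurableSet_diagonal]
    refine .of_forall fun x => ?_
    have hfiber : Prod.mk x ⁻¹' Set.diagonal R = {x} := by
      ext y
      simp [eq_comm]
    simp only [hfiber, measure_singleton, Pi.zero_apply]
  rw [← hXY.map_prod_eq_prod_map_map hX hY] at hdiag
  exact ae_of_ae_map (hX.prodMk hY) (measure_eq_zero_iff_ae_notMem.1 hdiag)

theorem ae_injective_pi {ι : Type*} [Fintype ι] (ν : ι → Measure R)
    [∀ i, IsProbabilityMeasure (ν i)] [∀ i, NullSingletonClass (ν i)] :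
    ∀ᵐ h ∂Measure.pi ν, Function.Injective h := by
  have hne (i j : ι) (hij : i ≠ j) : ∀ᵐ h ∂Measure.pi ν, h i ≠ h j := by
    have : NullSingletonClass ((Measure.pi ν).map fun h => h j) := by
      rw [(measurePreserving_eval ν j).map_eq]
      infer_instance
    exact ae_ne_of_indepFun (measurable_pi_apply i).aemeasurable
      (measurable_pi_apply j).aemeasurable
      ((iIndepFun_pi fun _ => aemeasurable_id).indepFun hij)
  have hall : ∀ᵐ h ∂Measure.pi ν, ∀ i j, i ≠ j → h i ≠ h j := by
    simpa only [ae_all_iff] using hne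
  filter_upwards [hall] with h hh i j
  exact not_imp_not.1 (hh i j)

end Independent

instance isProbabilityMeasure_restrict_Icc_zero_one :
    IsProbabilityMeasure ((volume : Measure ℝ).restrict (Set.Icc 0 1)) :=
  ⟨by simp⟩

instance isProbabilityMeasure_uniformHash (J : Type*) [Fintype J] :
    IsProbabilityMeasure (uniformHash J) :=
  inferInstanceAs (IsProbabilityMeasure (Measure.pi _))

theorem isExchangeable_uniformHash (J : Type*) [Fintype J] : IsExchangeable (uniformHash J) :=
  isExchangeable_pi _

theorem ae_injective_uniformHash (J : Type*) [Fintype J] :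
    ∀ᵐ h ∂uniformHash J, Function.Injective h :=
  ae_injective_pi _

theorem sum_supp_inter_supp_mul {n : ℕ} (a b : Fin n → ℝ) :
    ∑ k ∈ supp a ∩ supp b, a k * b k = ∑ k, a k * b k := by
  refine sum_subset (subset_univ _) fun k _ hk => ?_
  simpa [supp, or_iff_not_imp_left] using hk

theorem minhash_product_expectation_general {ι : Type*} [DecidableEq ι] {μ : Measure (ι → ℝ)}
    [IsProbabilityMeasure μ] (hμ : IsExchangeable μ) (a b : ι → ℝ) {A B : Finset ι}
    (hA : A.Nonempty) (hB : B.Nonempty) (hinj : ∀ᵐ h ∂μ, Set.InjOn h ↑(A ∪ B)) :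
    ∫ h, (if h (argminOn A hA h) = h (argminOn B hB h) then (1 : ℝ) else 0) *
        a (argminOn A hA h) * b (argminOn B hB h) ∂μ
      = (∑ k ∈ A ∩ B, a k * b k) / (#(A ∪ B) : ℝ) := by
  have hAB : (A ∪ B).Nonempty := hA.mono subset_union_left
  let f (k : ι) : ℝ := if k ∈ A ∩ B then a k * b k else 0
  calc _ = ∫ h, f (argminOn (A ∪ B) hAB h) ∂μ := by
        refine integral_congr_ae ?_
        filter_upwards [hinj] with h hinj
        exact ite_apply_argminOn_mul_eq_ite_argminOn_union hA hB hAB a b hinj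
    _ = (#(A ∪ B) : ℝ)⁻¹ * ∑ k ∈ A ∪ B, f k := integral_argminOn hμ hAB hinj f
    _ = (#(A ∪ B) : ℝ)⁻¹ * ∑ k ∈ A ∩ B, a k * b k := by
        rw [sum_ite_mem, inter_eq_right.2 inter_subset_union]
    _ = (∑ k ∈ A ∩ B, a k * b k) / (#(A ∪ B) : ℝ) := inv_mul_eq_div _ _

/-- For vectors `a, b ∈ ℝⁿ` with nonempty supports `A`, `B` and an independent uniform
hash family `h` on `{1,...,n}`, the random variable
`Z = 1[h(j_A) = h(j_B)] ⬝ a[j_A] ⬝ b[j_B]` satisfies `E[Z] = ⟨a,b⟩ / |A ∪ B|`. -/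
theorem minhash_product_expectation {n : ℕ} (a b : Fin n → ℝ)
    (hA : (supp a).Nonempty) (hB : (supp b).Nonempty) :
    ∫ h, Zuw a b (supp a) (supp b) hA hB h ∂(uniformHash (Fin n))
      = (∑ k, a k * b k) / ((supp a ∪ supp b).card : ℝ) := by
  rw [← sum_supp_inter_supp_mul]
  exact minhash_product_expectation_general (isExchangeable_uniformHash _) a b hA hB <|
    (ae_injective_uniformHash _).mono fun _ hinj => hinj.injOn
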